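/- For any diagonal matrix M_n = diag(b_0,…,b_{n−1}) on the auxiliary space, the transfer matrices commute: [t^(n)(u), t^(n)(v)] = 0 in End(H), where t^(n)(u) := Tr_{V_a}(M_n T_a(u)). -/

import Mathlib

noncomputable section
open scoped BigOperators

variable {F : Type*}

/-- `x ⊖ y := (x - y)/(1 + β·y)`. -/
def om [Field F] (β x y : F) : F := (x - y) / (1 + β * y)

/-- `⊖ t := -t/(1 + β·t)`. -/
def negOm [Field F] (β t : F) : F := (-t) / (1 + β * t)

/-- The R-matrix `R^{(n)}(x,y)` on `V ⊗ V`, `V = F^n`, with entries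
`R_{ij,kl} = (1 + [k<l]·β(x⊖y)) δ_{il} δ_{jk} + [k>l]·(x⊖y) δ_{ik} δ_{jl}`;
the row index is the pair `(i,j)`, the column index is the pair `(k,l)`. -/
def Rmat [Field F] (n : ℕ) (β x y : F) :
    Matrix (Fin n × Fin n) (Fin n × Fin n) F := Matrix.of fun p q =>
  (if p.1 = q.2 ∧ p.2 = q.1 then (if q.1 < q.2 then 1 + β * om β x y else 1) else 0) +
  (if p.1 = q.1 ∧ p.2 = q.2 ∧ q.2 < q.1 then om β x y else 0)

/-- `R_{a i}(u, τ)` : the R-matrix acting on the auxiliary space (first factor)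
and the `i`-th site of `H = (F^n)^{⊗N}`, identity elsewhere. -/
def Rsite [Field F] (n N : ℕ) (β u τ : F) (i : Fin N) :
    Matrix (Fin n × (Fin N → Fin n)) (Fin n × (Fin N → Fin n)) F := Matrix.of fun p q =>
  Rmat n β u τ (p.1, p.2 i) (q.1, q.2 i) *
    (if ∀ j, j ≠ i → p.2 j = q.2 j then 1 else 0)

/-- The monodromy matrix `T_a(u) = R_{aN}(u,t_N) ⋯ R_{a1}(u,t_1)` on `V_a ⊗ H`. -/
def Tmono [Field F] (n N : ℕ) (β u : F) (t : Fin N → F) :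
    Matrix (Fin n × (Fin N → Fin n)) (Fin n × (Fin N → Fin n)) F :=
  ((List.ofFn fun i : Fin N => Rsite n N β u (t i) i).reverse).prod

/-- The block `T_a(u)_{r c}` (with respect to the auxiliary space) as an operator on `H`. -/
def blockOp [Field F] (n N : ℕ) (β u : F) (t : Fin N → F) (r c : Fin n) :
    Matrix (Fin N → Fin n) (Fin N → Fin n) F :=
  Matrix.of fun s s' => Tmono n N β u t (r, s) (c, s')

/-- The natural basis vector `|n_1,…,n_N⟩` of `H` (also used as a dual basis covector). -/
def ket [Field F] (n N : ℕ) (g : Fin N → Fin n) : (Fin N → Fin n) → F :=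
  fun s => if s = g then 1 else 0

/-- The transfer matrix `t^{(n)}(u) = Tr_{V_a}(M_n T_a(u))` with `M_n = diag(b_0,…,b_{n-1})`. -/
def transferM [Field F] (n N : ℕ) (β u : F) (t : Fin N → F) (b : Fin n → F) :
    Matrix (Fin N → Fin n) (Fin N → Fin n) F :=
  Matrix.of fun s s' => ∑ a : Fin n, b a * Tmono n N β u t (a, s) (a, s')

open Matrix

/-- Kronecker delta. -/
def dl (F : Type*) [Field F] {α : Type*} [DecidableEq α] (x y : α) : F := if x = y then 1 else 0

def cc [Field F] {n : ℕ} (β x : F) (k l : Fin n) : F := if k < l then 1 + β * x else 1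
def dd [Field F] {n : ℕ} (x : F) (k l : Fin n) : F := if l < k then x else 0

theorem Rmat_eq [Field F] (n : ℕ) (β x y : F) (i j k l : Fin n) :
    Rmat n β x y (i, j) (k, l) =
      cc β (om β x y) k l * (dl F i l * dl F j k) + dd (om β x y) k l * (dl F i k * dl F j l) := by
  simp only [Rmat, dl, cc, dd, Matrix.of_apply]
  simp only [ite_and]
  split_ifs <;> simp

theorem sum_dl [Field F] {n : ℕ} (g : Fin n → F) (y : Fin n) :
    ∑ x, g x * dl F x y = g y := by simp [dl]

/-- collapse of both row indices -/
theorem col12 [Field F] (n : ℕ) (β x y : F) (g : Fin n → Fin n → F) (k l : Fin n) :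
    ∑ i, ∑ j, g i j * Rmat n β x y (i, j) (k, l) =
      cc β (om β x y) k l * g l k + dd (om β x y) k l * g k l := by
  simp only [Rmat_eq, dl, mul_add, Finset.sum_add_distrib]
  simp [mul_comm]

theorem col1 [Field F] (n : ℕ) (β x y : F) (g : Fin n → F) (j k l : Fin n) :
    ∑ i, g i * Rmat n β x y (i, j) (k, l) =
      cc β (om β x y) k l * (dl F j k * g l) + dd (om β x y) k l * (dl F j l * g k) := by
  simp only [Rmat_eq, dl, mul_add, Finset.sum_add_distrib]
  simp [mul_comm]

theorem col2 [Field F] (n : ℕ) (β x y : F) (g : Fin n → F) (i k l : Fin n) :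
    ∑ j, g j * Rmat n β x y (i, j) (k, l) =
      cc β (om β x y) k l * (dl F i l * g k) + dd (om β x y) k l * (dl F i k * g l) := by
  simp only [Rmat_eq, dl, mul_add, Finset.sum_add_distrib]
  simp [mul_comm]

theorem om_add [Field F] (β u v w : F) (hv : 1 + β * v ≠ 0) (hw : 1 + β * w ≠ 0) :
    om β u w = om β u v + om β v w + β * om β u v * om β v w := by
  have hp : om β u w * (1 + β * w) = u - w := div_mul_cancel₀ _ hw
  have hq : om β u v * (1 + β * v) = u - v := div_mul_cancel₀ _ hv
  have hr : om β v w * (1 + β * w) = v - w := div_mul_cancel₀ _ hw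
  apply mul_right_cancel₀ hw
  linear_combination hp - hq - (1 + β * om β u v) * hr

set_option maxHeartbeats 2000000 in
/-- Yang-Baxter equation, in components. -/
theorem ybe [Field F] (n : ℕ) (β u v w : F) (hv : 1 + β * v ≠ 0) (hw : 1 + β * w ≠ 0)
    (a b s c d e : Fin n) :
    ∑ a', ∑ b', ∑ s', Rmat n β u v (a, b) (a', b') *
        (Rmat n β u w (a', s) (c, s') * Rmat n β v w (b', s') (d, e)) =
    ∑ a', ∑ b', (∑ s', Rmat n β v w (b, s) (b', s') * Rmat n β u w (a, s') (a', e)) *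
        Rmat n β u v (a', b') (c, d) := by
  have h1 : ∀ a', ∑ b', ∑ s', Rmat n β u v (a, b) (a', b') *
        (Rmat n β u w (a', s) (c, s') * Rmat n β v w (b', s') (d, e)) =
      ∑ b', ∑ s', (Rmat n β u v (a, b) (a', b') * Rmat n β u w (a', s) (c, s')) *
          Rmat n β v w (b', s') (d, e) := by
    intro a'
    simp only [mul_assoc]
  simp only [h1]
  simp only [col12 n β v w (fun b' s' => Rmat n β u v _ (_, b') * Rmat n β u w _ (_, s'))]
  rw [col12 n β u v (fun a' b' => ∑ s', Rmat n β v w (b, s) (b', s') *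
    Rmat n β u w (a, s') (a', e))]
  simp only [Finset.sum_add_distrib, ← Finset.mul_sum, col1, col2]
  simp only [Rmat_eq]
  rw [om_add β u v w hv hw]
  generalize om β u v = q
  generalize om β v w = r
  rcases lt_trichotomy c d with h | h | h <;> rcases lt_trichotomy d e with h' | h' | h' <;>
    rcases lt_trichotomy c e with h'' | h'' | h'' <;>
    first
    | (exfalso; order)
    | (subst_vars
       simp only [cc, dd, lt_irrefl, if_true, if_false, *, not_lt_of_gt h, not_lt_of_gt h', not_lt_of_gt h'']
       ring)
    | (subst_vars
       simp [cc, dd, *, le_of_lt, not_lt_of_ge]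
       try ring)

/-- Site embedding. -/
def E [Field F] (n N : ℕ) (i : Fin N) (m : Matrix (Fin n) (Fin n) F) :
    Matrix (Fin N → Fin n) (Fin N → Fin n) F :=
  Matrix.of fun s s' => m (s i) (s' i) * (if ∀ j, j ≠ i → s j = s' j then 1 else 0)

theorem sum_site [Field F] {n N : ℕ} (i : Fin N) (s : Fin N → Fin n)
    (g : (Fin N → Fin n) → F) :
    ∑ s', (if ∀ j, j ≠ i → s j = s' j then g s' else 0) = ∑ k, g (Function.update s i k) := by
  rw [← Finset.sum_filter]
  symm
  refine Finset.sum_bij' (fun k _ => Function.update s i k) (fun s' _ => s' i) ?_ ?_ ?_ ?_ ?_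
  · intro k _
    simp only [Finset.mem_filter, Finset.mem_univ, true_and]
    intro j hj
    simp [hj]
  · simp
  · simp
  · intro s' hs
    simp only [Finset.mem_filter, Finset.mem_univ, true_and] at hs
    funext j
    by_cases hj : j = i
    · subst hj; simp
    · simp [hj, hs j hj]
  · simp

theorem E_mul [Field F] (n N : ℕ) (i : Fin N) (m m' : Matrix (Fin n) (Fin n) F) :
    E n N i (m * m') = E n N i m * E n N i m' := by
  ext s s''
  rw [Matrix.mul_apply]
  have : ∀ s', E n N i m s s' * E n N i m' s' s'' =
      if ∀ j, j ≠ i → s j = s' j then m (s i) (s' i) * E n N i m' s' s'' else 0 := by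
    intro s'
    simp only [E, Matrix.of_apply]
    split_ifs <;> simp
  simp only [this]
  rw [sum_site i s (fun s' => m (s i) (s' i) * E n N i m' s' s'')]
  simp only [E, Matrix.of_apply, Matrix.mul_apply, Finset.sum_mul, Function.update_self, mul_assoc]
  refine Finset.sum_congr rfl fun k _ => ?_
  congr 3
  refine propext (forall_congr' fun j => forall_congr' fun hj => ?_)
  simp [hj]

theorem E_mul_apply_ne [Field F] (n N : ℕ) {i j : Fin N} (hij : i ≠ j)
    (m m' : Matrix (Fin n) (Fin n) F) (s s'' : Fin N → Fin n) :
    (E n N i m * E n N j m') s s'' =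
      m (s i) (s'' i) * m' (s j) (s'' j) *
        (if ∀ k, k ≠ i → k ≠ j → s k = s'' k then 1 else 0) := by
  rw [Matrix.mul_apply]
  have : ∀ s', E n N i m s s' * E n N j m' s' s'' =
      if ∀ j, j ≠ i → s j = s' j then m (s i) (s' i) * E n N j m' s' s'' else 0 := by
    intro s'
    simp only [E, Matrix.of_apply]
    split_ifs <;> simp
  simp only [this]
  rw [sum_site i s (fun s' => m (s i) (s' i) * E n N j m' s' s'')]
  simp only [E, Matrix.of_apply, Function.update_self, Function.update_of_ne hij.symm]
  rw [Finset.sum_eq_single (s'' i)]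
  · rw [mul_assoc]
    congr 3
    refine propext ⟨fun h k hk hk' => ?_, fun h k hk => ?_⟩
    · have := h k hk'
      rwa [Function.update_of_ne hk] at this
    · by_cases hki : k = i
      · subst hki; simp
      · rw [Function.update_of_ne hki]; exact h k hki hk
  · intro k _ hk
    rw [if_neg]
    · simp
    · intro h
      have := h i hij
      simp at this
      exact hk this
  · simp

theorem E_comm [Field F] (n N : ℕ) {i j : Fin N} (hij : i ≠ j)
    (m m' : Matrix (Fin n) (Fin n) F) :
    E n N i m * E n N j m' = E n N j m' * E n N i m := by
  ext s s''
  rw [E_mul_apply_ne n N hij, E_mul_apply_ne n N hij.symm, mul_comm (m _ _)]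
  congr 2
  exact propext ⟨fun h k a b => h k b a, fun h k a b => h k b a⟩

def Phi1 (n : ℕ) (A : Type*) [Ring A] :
    Matrix (Fin n) (Fin n) A →* Matrix (Fin n × Fin n) (Fin n × Fin n) A where
  toFun X := Matrix.of fun p q => if p.2 = q.2 then X p.1 q.1 else 0
  map_one' := by
    ext p q
    simp only [Matrix.of_apply, Matrix.one_apply, Prod.ext_iff]
    split_ifs <;> simp_all
  map_mul' X Y := by
    ext p q
    simp only [Matrix.of_apply, Matrix.mul_apply, Fintype.sum_prod_type]
    by_cases h : p.2 = q.2 <;> simp [h]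

def Phi2 (n : ℕ) (A : Type*) [Ring A] :
    Matrix (Fin n) (Fin n) A →* Matrix (Fin n × Fin n) (Fin n × Fin n) A where
  toFun X := Matrix.of fun p q => if p.1 = q.1 then X p.2 q.2 else 0
  map_one' := by
    ext p q
    simp only [Matrix.of_apply, Matrix.one_apply, Prod.ext_iff]
    split_ifs <;> simp_all
  map_mul' X Y := by
    ext p q
    simp only [Matrix.of_apply, Matrix.mul_apply, Fintype.sum_prod_type]
    by_cases h : p.1 = q.1 <;> simp [h]

theorem Phi12 (n : ℕ) (A : Type*) [Ring A] (X Y : Matrix (Fin n) (Fin n) A)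
    (p q : Fin n × Fin n) : (Phi1 n A X * Phi2 n A Y) p q = X p.1 q.1 * Y p.2 q.2 := by
  simp [Phi1, Phi2, Matrix.mul_apply, Fintype.sum_prod_type]

theorem Phi21 (n : ℕ) (A : Type*) [Ring A] (X Y : Matrix (Fin n) (Fin n) A)
    (p q : Fin n × Fin n) : (Phi2 n A Y * Phi1 n A X) p q = Y p.2 q.2 * X p.1 q.1 := by
  simp [Phi1, Phi2, Matrix.mul_apply, Fintype.sum_prod_type]

theorem list_rtt {M ι : Type*} [Monoid M] (R : M) (X Y : ι → M)
    (h : ∀ i, R * (X i * Y i) = Y i * X i * R)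
    (hc : ∀ i j, i ≠ j → X i * Y j = Y j * X i) (l : List ι) (hl : l.Nodup) :
    R * ((l.map X).prod * (l.map Y).prod) = (l.map Y).prod * (l.map X).prod * R := by
  induction l with
  | nil => simp
  | cons i l ih =>
    rw [List.nodup_cons] at hl
    have ih := ih hl.2
    simp only [List.map_cons, List.prod_cons]
    have c1 : (l.map X).prod * Y i = Y i * (l.map X).prod := by
      apply Commute.list_prod_left
      intro x hx
      obtain ⟨j, hj, rfl⟩ := List.mem_map.1 hx
      exact hc j i (by rintro rfl; exact hl.1 hj)
    have c2 : X i * (l.map Y).prod = (l.map Y).prod * X i := by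
      apply Commute.list_prod_right
      intro x hx
      obtain ⟨j, hj, rfl⟩ := List.mem_map.1 hx
      exact hc i j (by rintro rfl; exact hl.1 hj)
    generalize (l.map X).prod = PX at *
    generalize (l.map Y).prod = PY at *
    calc R * (X i * PX * (Y i * PY)) = R * (X i * (PX * Y i) * PY) := by simp only [mul_assoc]
      _ = R * (X i * Y i) * (PX * PY) := by rw [c1]; simp only [mul_assoc]
      _ = Y i * X i * (R * (PX * PY)) := by rw [h]; simp only [mul_assoc]
      _ = Y i * (X i * PY) * PX * R := by rw [ih]; simp only [mul_assoc]
      _ = _ := by rw [c2]; simp only [mul_assoc]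

/-- Operator-valued L-matrix. -/
def Lop [Field F] (n N : ℕ) (β u τ : F) (i : Fin N) :
    Matrix (Fin n) (Fin n) (Matrix (Fin N → Fin n) (Fin N → Fin n) F) :=
  Matrix.of fun a c => E n N i (Matrix.of fun s s' => Rmat n β u τ (a, s) (c, s'))

theorem Lop_eq [Field F] (n N : ℕ) (β u τ : F) (i : Fin N) :
    (Matrix.compRingEquiv (Fin n) (Fin N → Fin n) F).symm (Rsite n N β u τ i) =
      Lop n N β u τ i := by
  rfl

def RA [Field F] (n N : ℕ) (β u v : F) :
    Matrix (Fin n × Fin n) (Fin n × Fin n) (Matrix (Fin N → Fin n) (Fin N → Fin n) F) :=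
  (Rmat n β u v).map (algebraMap F (Matrix (Fin N → Fin n) (Fin N → Fin n) F))

/-- The site embedding as a linear map. -/
def El [Field F] (n N : ℕ) (i : Fin N) : Matrix (Fin n) (Fin n) F →ₗ[F]
    Matrix (Fin N → Fin n) (Fin N → Fin n) F where
  toFun := E n N i
  map_add' x y := by ext s s'; simp only [E, Matrix.of_apply, Matrix.add_apply, add_mul]
  map_smul' x y := by ext s s'; simp [E, mul_assoc]

theorem local_rtt [Field F] (n N : ℕ) (β u v w : F) (hv : 1 + β * v ≠ 0) (hw : 1 + β * w ≠ 0)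
    (i : Fin N) :
    RA n N β u v * (Phi1 n _ (Lop n N β u w i) * Phi2 n _ (Lop n N β v w i)) =
      Phi2 n _ (Lop n N β v w i) * Phi1 n _ (Lop n N β u w i) * RA n N β u v := by
  ext1 ⟨a, b⟩ ⟨c, d⟩
  rw [Matrix.mul_apply, Matrix.mul_apply]
  simp only [Phi12, Phi21, RA, Matrix.map_apply, Lop, Matrix.of_apply, ← E_mul,
    ← Algebra.commutes (R := F) (A := Matrix (Fin N → Fin n) (Fin N → Fin n) F),
    ← Algebra.smul_def]
  change ∑ x, _ • El n N i _ = ∑ x, _ • El n N i _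
  simp only [← map_smul, ← map_sum]
  congr 1
  ext s e
  have := ybe n β u v w hv hw a b s c d e
  simp only [Matrix.sum_apply, Matrix.smul_apply, Matrix.mul_apply, Matrix.of_apply, smul_eq_mul,
    Fintype.sum_prod_type]
  simp only [Finset.mul_sum, Finset.sum_mul] at this ⊢
  rw [this]
  refine Finset.sum_congr rfl fun _ _ => Finset.sum_congr rfl fun _ _ =>
    Finset.sum_congr rfl fun _ _ => ?_
  ring

def TA [Field F] (n N : ℕ) (β u : F) (t : Fin N → F) :
    Matrix (Fin n) (Fin n) (Matrix (Fin N → Fin n) (Fin N → Fin n) F) :=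
  (Matrix.compRingEquiv (Fin n) (Fin N → Fin n) F).symm (Tmono n N β u t)

theorem TA_eq [Field F] (n N : ℕ) (β u : F) (t : Fin N → F) :
    TA n N β u t = ((List.finRange N).reverse.map fun i => Lop n N β u (t i) i).prod := by
  rw [TA, Tmono, map_list_prod, List.ofFn_eq_map, ← List.map_reverse, List.map_map]
  rfl

theorem rtt [Field F] (n N : ℕ) (β u v : F) (t : Fin N → F) (hv : 1 + β * v ≠ 0)
    (ht : ∀ i, 1 + β * t i ≠ 0) :
    RA n N β u v * (Phi1 n _ (TA n N β u t) * Phi2 n _ (TA n N β v t)) =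
      Phi2 n _ (TA n N β v t) * Phi1 n _ (TA n N β u t) * RA n N β u v := by
  rw [TA_eq, TA_eq, map_list_prod, map_list_prod, List.map_map, List.map_map]
  apply list_rtt
  · intro i
    exact local_rtt n N β u v (t i) hv (ht i) i
  · intro i j hij
    ext1 p q
    simp only [Function.comp]
    rw [Phi12, Phi21]
    exact E_comm n N hij _ _
  · exact List.nodup_reverse.2 (List.nodup_finRange N)

def Rinv [Field F] (n : ℕ) (β u v : F) : Matrix (Fin n × Fin n) (Fin n × Fin n) F :=
  (Rmat n β v u).submatrix Prod.swap Prod.swap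

theorem om_neg [Field F] (β u v : F) (hu : 1 + β * u ≠ 0) (hv : 1 + β * v ≠ 0) :
    om β u v + om β v u * (1 + β * om β u v) = 0 := by
  have h := om_add β u v u hv hu
  have h0 : om β u u = 0 := by simp [om]
  linear_combination h0 - h

/-- unitarity -/
theorem R_mul_Rinv [Field F] (n : ℕ) (β u v : F) (hu : 1 + β * u ≠ 0) (hv : 1 + β * v ≠ 0) :
    Rinv n β u v * Rmat n β u v = 1 := by
  ext ⟨a, b⟩ ⟨c, d⟩
  have h := om_neg β u v hu hv
  have h' : (1 + β * om β v u) * (1 + β * om β u v) = 1 := by linear_combination β * h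
  rw [Matrix.mul_apply, Fintype.sum_prod_type]
  rw [col12 n β u v (fun i j => Rinv n β u v (a, b) (i, j))]
  simp only [Rinv, Matrix.submatrix_apply, Prod.swap, Rmat_eq]
  have : (1 : Matrix (Fin n × Fin n) (Fin n × Fin n) F) (a, b) (c, d) = dl F a c * dl F b d := by
    simp only [Matrix.one_apply, dl, Prod.ext_iff]
    split_ifs <;> simp_all
  rw [this]
  generalize om β u v = q at *
  generalize om β v u = r at *
  rcases lt_trichotomy c d with k | k | k
  · simp only [cc, dd, k, not_lt_of_gt k, if_true, if_false]
    linear_combination (dl F a c * dl F b d) * h'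
  · subst k
    simp [cc, dd]; try ring
  · simp only [cc, dd, k, not_lt_of_gt k, if_true, if_false]
    linear_combination (dl F a d * dl F b c) * h

theorem R_ice [Field F] (n : ℕ) (β u v : F) (b : Fin n → F) (p q : Fin n × Fin n) :
    Rmat n β u v p q * (b q.1 * b q.2) = (b p.1 * b p.2) * Rmat n β u v p q := by
  obtain ⟨i, j⟩ := p
  obtain ⟨k, l⟩ := q
  rw [Rmat_eq]
  by_cases h1 : i = l <;> by_cases h2 : j = k <;> by_cases h3 : i = k <;> by_cases h4 : j = l <;>
    simp [dl, h1, h2, h3, h4] <;> simp_all <;> ring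

theorem one_add_ne [Field F] [CharZero F] {ι : Type*} (x : ι → F)
    (h : AlgebraicIndependent ℚ x) (i j : ι) : 1 + x i * x j ≠ 0 := by
  intro h0
  have : (1 + MvPolynomial.X i * MvPolynomial.X j : MvPolynomial ι ℚ) = 0 := by
    apply (algebraicIndependent_iff_injective_aeval.1 h)
    simpa using h0
  have := congrArg (MvPolynomial.eval (fun _ => (0 : ℚ))) this
  simp at this

theorem transferM_eq [Field F] (n N : ℕ) (β u : F) (t : Fin N → F) (b : Fin n → F) :
    transferM n N β u t b = ∑ a, b a • TA n N β u t a a := by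
  ext s s'
  simp only [transferM, Matrix.sum_apply, Matrix.smul_apply, Matrix.of_apply, smul_eq_mul]
  rfl

theorem trace_swap [Field F] {m : Type*} [Fintype m] [DecidableEq m] {A : Type*} [Ring A]
    [Algebra F A] (R S : Matrix m m F) (hS : S * R = 1) (w : m → F)
    (hw : ∀ p q, R p q * w q = w p * R p q) (X Y : Matrix m m A)
    (h : R.map (algebraMap F A) * X = Y * R.map (algebraMap F A)) :
    ∑ p, w p • X p p = ∑ p, w p • Y p p := by
  have hS' : R * S = 1 := mul_eq_one_comm.1 hS
  have hX : X = S.map (algebraMap F A) * (Y * R.map (algebraMap F A)) := by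
    rw [← h, ← mul_assoc, ← Matrix.map_mul, hS]
    simp
  have key : ∀ p, w p • X p p = ∑ r, ∑ q, (R r p * w p * S p q) • Y q r := by
    intro p
    conv_lhs => rw [hX, ← mul_assoc]
    simp only [Matrix.mul_apply, Matrix.map_apply, Finset.smul_sum, Finset.sum_mul]
    refine Finset.sum_congr rfl fun r _ => Finset.sum_congr rfl fun q _ => ?_
    rw [← Algebra.commutes, ← Algebra.smul_def, ← Algebra.smul_def, smul_smul, smul_smul]
    congr 1; ring
  simp only [key]
  rw [Finset.sum_comm]
  refine Finset.sum_congr rfl fun r _ => ?_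
  rw [Finset.sum_comm]
  have : ∀ q, ∑ p, (R r p * w p * S p q) • Y q r =
      (w r * (1 : Matrix m m F) r q) • Y q r := by
    intro q
    rw [← hS', Matrix.mul_apply, Finset.mul_sum, Finset.sum_smul]
    refine Finset.sum_congr rfl fun p _ => ?_
    rw [hw, mul_assoc]
  simp only [this]
  rw [Finset.sum_eq_single r]
  · simp
  · intro q _ hq
    simp [Matrix.one_apply, hq.symm]
  · simp

/-- **Commutativity of transfer matrices**: `[t^{(n)}(u), t^{(n)}(v)] = 0`
for any diagonal twist `M_n = diag(b_0,…,b_{n-1})`. -/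
theorem transfer_commute [Field F] [CharZero F] (n N : ℕ) (hn : 2 ≤ n) (β u v : F)
    (t : Fin N → F) (b : Fin n → F)
    (hind : AlgebraicIndependent ℚ (Sum.elim ![β, u, v] t)) :
    transferM n N β u t b * transferM n N β v t b =
      transferM n N β v t b * transferM n N β u t b := by
  have hu : 1 + β * u ≠ 0 := by simpa using one_add_ne _ hind (Sum.inl 0) (Sum.inl 1)
  have hv : 1 + β * v ≠ 0 := by simpa using one_add_ne _ hind (Sum.inl 0) (Sum.inl 2)
  have ht : ∀ i, 1 + β * t i ≠ 0 := fun i => by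
    simpa using one_add_ne _ hind (Sum.inl 0) (Sum.inr i)
  have key := trace_swap (Rmat n β u v) (Rinv n β u v) (R_mul_Rinv n β u v hu hv)
    (fun p => b p.1 * b p.2) (R_ice n β u v b) _ _ (rtt n N β u v t hv ht)
  simp only [Phi12, Phi21, Fintype.sum_prod_type] at key
  rw [transferM_eq, transferM_eq, Finset.sum_mul_sum, Finset.sum_mul_sum]
  simp only [smul_mul_smul_comm]
  rw [key, Finset.sum_comm]
  simp only [mul_comm (b _) (b _)]
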